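/- Let p be a prime and r ≥ 4 an integer, and let M_{r,p} be the matroid of the labeled family of vectors e_1, v = e_2 + ⋯ + e_r, and v_{k,ℓ} = k·e_1 + e_ℓ (2 ≤ ℓ ≤ r, 0 ≤ k < p) in F_p^r, with i the label of e_1 and j the label of v. Then the pair i, j is positively correlated, i.e. b · b_{ij} > b_i · b_j, and α(M_{r,p}; i, j) = (r−1)² / (2 + (r−1)·(r−2)). -/

import Mathlib

/-- The index (label) type of the configuration `M_{r,p}`: one label for `e₁`, one label
for `v = e₂ + ⋯ + e_r`, and one label for each vector `v_{k,ℓ} = k·e₁ + e_ℓ` with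
`ℓ ∈ {2, …, r}` (encoded as a nonzero index of `Fin r`) and `k ∈ F_p`. In total there
are `2 + p·(r−1)` labels. -/
abbrev MrpIndex (r p : ℕ) : Type :=
  Unit ⊕ Unit ⊕ ({l : Fin r // l.val ≠ 0} × ZMod p)

/-- The vectors of the configuration `M_{r,p}` in `F_p^r`: the label `Sum.inl ()`
carries `e₁`, the label `Sum.inr (Sum.inl ())` carries `v = e₂ + ⋯ + e_r`, and the
label `Sum.inr (Sum.inr (ℓ, k))` carries `v_{k,ℓ} = k·e₁ + e_ℓ`. -/
def mrpVec (r p : ℕ) : MrpIndex r p → (Fin r → ZMod p)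
  | Sum.inl _ => fun m => if m.val = 0 then 1 else 0
  | Sum.inr (Sum.inl _) => fun m => if m.val = 0 then 0 else 1
  | Sum.inr (Sum.inr lk) => fun m =>
      if m.val = 0 then lk.2 else if m = lk.1.1 then 1 else 0

/-- The label of the vector `e₁` in `M_{r,p}`. -/
def mrpI (r p : ℕ) : MrpIndex r p := Sum.inl ()

/-- The label of the vector `v = e₂ + ⋯ + e_r` in `M_{r,p}`. -/
def mrpJ (r p : ℕ) : MrpIndex r p := Sum.inr (Sum.inl ())

/-- A finite set `s` of labels of a labeled family `w` of vectors forms a vector-space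
basis if the family of vectors indexed by `s` is linearly independent and spans. -/
def FormsBasis (K : Type*) {ι : Type*} [Field K] {V : Type*} [AddCommGroup V] [Module K V]
    (w : ι → V) (s : Finset ι) : Prop :=
  LinearIndependent K (fun x : s => w x.val) ∧ Submodule.span K (w '' ↑s) = ⊤

/-!
A set of vectors spans exactly when no nonzero functional vanishes on it. A functional is given by
its value `x` at `e₁` and its values `y l` at the other basis vectors `e_l`, so whether a set of
`r` labels is a basis is decided by its fibres, the sets `g l` of those `k` for which
`k·e₁ + e_l` is chosen: a fibre with two elements forces `x = 0`, and once `x = 0` every nonempty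
fibre forces `y l = 0`, while the sum vector makes up for one empty fibre. Hence every fibre of a
basis is a singleton, except possibly for one with two elements and one that is empty. The only
other constraint arises when `j` is chosen, `i` is not, and all fibres are singletons `{k l}`; then
the `k l` must not sum to zero. With `n = r - 1` and `q` the order of the field this gives

  `b_{ij} = n q^(n-1)`, `b_i^j = q^n`, `2 b_j^i = q^(n-1) (q-1) (2 + n (n-1))`,
  `2 b^{ij} = n q^n (q-1)`,

so that `α = n² / (2 + n (n-1))`, which exceeds `1` exactly when `n > 2`.
-/

open Finset Function Module

section Counting

lemma natCard_subtype_eq_add {α : Type*} [Finite α] (P Q : α → Prop) :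
    Nat.card {a // P a} = Nat.card {a // P a ∧ Q a} + Nat.card {a // P a ∧ ¬ Q a} := by
  classical
  have := Fintype.ofFinite α
  simp only [Nat.card_eq_fintype_card, Fintype.card_subtype]
  rw [← card_filter_add_card_filter_not (s := {a | P a}) Q, filter_filter, filter_filter]

lemma natCard_subtype_or_of_disjoint {α : Type*} [Finite α] {P Q : α → Prop}
    (h : ∀ a, P a → ¬ Q a) :
    Nat.card {a // P a ∨ Q a} = Nat.card {a // P a} + Nat.card {a // Q a} := by
  rw [natCard_subtype_eq_add _ P]
  congr 1 <;> exact Nat.card_congr (Equiv.subtypeEquivRight (by grind))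

lemma natCard_mul_lt_natCard_mul_iff {α : Type*} [Finite α] (S T P Q : α → Prop) :
    Nat.card {a // S a ∧ T a ∧ P a} * Nat.card {a // S a ∧ T a ∧ Q a} <
        Nat.card {a // S a ∧ T a} * Nat.card {a // S a ∧ T a ∧ P a ∧ Q a} ↔
      Nat.card {a // S a ∧ T a ∧ P a ∧ ¬ Q a} * Nat.card {a // S a ∧ T a ∧ ¬ P a ∧ Q a} <
        Nat.card {a // S a ∧ T a ∧ ¬ P a ∧ ¬ Q a} * Nat.card {a // S a ∧ T a ∧ P a ∧ Q a} := by
  have hP := natCard_subtype_eq_add (fun a => S a ∧ T a ∧ P a) Q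
  have hP' := natCard_subtype_eq_add (fun a => S a ∧ T a ∧ ¬ P a) Q
  have hQ := natCard_subtype_eq_add (fun a => S a ∧ T a ∧ Q a) P
  have hS := natCard_subtype_eq_add (fun a => S a ∧ T a) P
  simp only [and_assoc] at hP hP' hQ hS
  simp only [and_comm (a := Q _)] at hQ
  rw [hS, hP, hP', hQ]
  constructor <;> intro h <;> nlinarith

lemma natCard_sum_eq_zero {L A : Type*} [Fintype L] [Nonempty L] [AddCommGroup A] [Fintype A] :
    Nat.card {f : L → A // ∑ l, f l = 0} = Fintype.card A ^ (Fintype.card L - 1) := by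
  classical
  obtain ⟨m⟩ := ‹Nonempty L›
  have translate (c : A) : #{f : L → A | ∑ l, f l = c} = #{f : L → A | ∑ l, f l = 0} :=
    card_equiv (Equiv.subRight (Pi.single m c)) fun f => by simp [sub_eq_zero]
  have fibres := card_eq_sum_card_fiberwise (s := (univ : Finset (L → A))) (t := univ)
    (f := fun f => ∑ l, f l) (fun _ _ => by simp)
  simp only [translate, card_univ, Fintype.card_fun, sum_const, smul_eq_mul] at fibres
  rw [← mul_pow_sub_one Fintype.card_ne_zero] at fibres
  rw [Nat.card_eq_fintype_card, Fintype.card_subtype]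
  exact (Nat.eq_of_mul_eq_mul_left Fintype.card_pos fibres).symm

lemma natCard_sum_ne_zero {L A : Type*} [Fintype L] [Nonempty L] [AddCommGroup A] [Fintype A] :
    Nat.card {f : L → A // ∑ l, f l ≠ 0} =
      (Fintype.card A - 1) * Fintype.card A ^ (Fintype.card L - 1) := by
  have h := natCard_subtype_eq_add (fun _ : L → A => True) (fun f => ∑ l, f l = 0)
  simp only [true_and, natCard_sum_eq_zero,
    Nat.card_congr (Equiv.subtypeUnivEquiv fun _ => trivial), Nat.card_fun,
    Nat.card_eq_fintype_card (α := L), Nat.card_eq_fintype_card (α := A)] at h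
  rw [← mul_pow_sub_one Fintype.card_ne_zero] at h
  rw [Nat.sub_mul, one_mul]
  exact Nat.eq_sub_of_add_eq' h.symm

lemma choose_two_mul_two (q : ℕ) : q.choose 2 * 2 = q * (q - 1) := by
  rw [Nat.choose_two_right, Nat.div_mul_cancel (Nat.even_mul_pred_self q).two_dvd]

lemma two_mul_mul_choose_two_add (n q : ℕ) :
    2 * (n * (n - 1) * (q ^ (n - 2) * q.choose 2) + (q - 1) * q ^ (n - 1)) =
      q ^ (n - 1) * (q - 1) * (2 + n * (n - 1)) := by
  match n with
  | 0 | 1 => simp [mul_comm]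
  | m + 2 =>
    rw [show m + 2 - 1 = m + 1 from rfl, add_tsub_cancel_right]
    linear_combination (m + 2) * (m + 1) * q ^ m * choose_two_mul_two q

end Counting

section Profiles

variable {L : Type*} [Fintype L] {d : L → ℕ}

lemma one_le_and_sum_eq_card_iff :
    (∀ l, 1 ≤ d l) ∧ ∑ l, d l = Fintype.card L ↔ d = 1 := by
  refine ⟨fun ⟨hd, hs⟩ => ?_, by rintro rfl; simp⟩
  have h := (sum_eq_sum_iff_of_le (f := fun _ => 1) (g := d) (s := univ) fun l _ => hd l).1
    (by simp [hs])
  exact funext fun l => (h l (mem_univ l)).symm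

lemma natCard_profile_mem {K : Type*} [Fintype K] (T : Finset (L → ℕ)) :
    Nat.card {g : L → Finset K // (fun l => #(g l)) ∈ T} =
      ∑ d ∈ T, ∏ l, (Fintype.card K).choose (d l) := by
  classical
  rw [Nat.card_eq_fintype_card, Fintype.card_subtype, card_eq_sum_card_fiberwise
    (f := fun (g : L → Finset K) l => #(g l)) (t := T) (by simp [Set.MapsTo])]
  refine sum_congr rfl fun d hd => ?_
  have fibre : ({g ∈ {g : L → Finset K | (fun l => #(g l)) ∈ T} | (fun l => #(g l)) = d} :
      Finset (L → Finset K)) = Fintype.piFinset fun l => powersetCard (d l) univ := by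
    ext g
    simp only [mem_filter, mem_univ, true_and, Fintype.mem_piFinset, mem_powersetCard,
      subset_univ, ← funext_iff]
    exact and_iff_right_of_imp fun h => h ▸ hd
  simp [fibre]

lemma natCard_profile_mem_of_prod_eq {K : Type*} [Fintype K] {T : Finset (L → ℕ)} {C : ℕ}
    (hT : ∀ d ∈ T, ∏ l, (Fintype.card K).choose (d l) = C) :
    Nat.card {g : L → Finset K // (fun l => #(g l)) ∈ T} = #T * C := by
  rw [natCard_profile_mem, sum_congr rfl hT, sum_const, smul_eq_mul]

variable [DecidableEq L]

lemma sum_update_add (d : L → ℕ) (m : L) (c : ℕ) :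
    ∑ l, update d m c l + d m = ∑ l, d l + c := by
  rw [sum_update_of_mem (mem_univ m), ← add_sum_erase univ d (mem_univ m),
    sdiff_singleton_eq_erase]
  ring

lemma sum_mulSingle_add_one (m : L) (c : ℕ) :
    ∑ l, (Pi.mulSingle m c : L → ℕ) l + 1 = Fintype.card L + c := by
  simpa [Pi.mulSingle] using sum_update_add (1 : L → ℕ) m c

lemma one_le_and_sum_eq_card_add_one_iff :
    (∀ l, 1 ≤ d l) ∧ ∑ l, d l = Fintype.card L + 1 ↔ ∃ m, Pi.mulSingle m 2 = d := by
  constructor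
  · rintro ⟨hd, hs⟩
    obtain ⟨m, -, hm⟩ : ∃ m ∈ univ, 1 < d m :=
      exists_lt_of_sum_lt (s := univ) (f := fun _ : L => 1) (by simp [hs])
    have lowered : update d m (d m - 1) = 1 := one_le_and_sum_eq_card_iff.1
      ⟨fun l => by grind [update_apply], by have := sum_update_add d m (d m - 1); omega⟩
    have hm₂ : d m = 2 := by
      have := congrFun lowered m
      simp only [update_self, Pi.one_apply] at this
      omega
    exact ⟨m, by rw [Pi.mulSingle, ← lowered, update_idem, ← hm₂, update_eq_self]⟩
  · rintro ⟨m, rfl⟩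
    have := sum_mulSingle_add_one m 2
    exact ⟨fun l => by grind, by omega⟩

lemma at_most_one_zero_and_sum_add_one_eq_card_iff :
    (∀ a b, d a = 0 → d b = 0 → a = b) ∧ ∑ l, d l + 1 = Fintype.card L ↔
      ∃ m, Pi.mulSingle m 0 = d := by
  constructor
  · rintro ⟨hd, hs⟩
    obtain ⟨m, -, hm⟩ : ∃ m ∈ univ, d m < 1 :=
      exists_lt_of_sum_lt (s := univ) (g := fun _ : L => 1) (by simp [← hs])
    have raised : update d m 1 = 1 := one_le_and_sum_eq_card_iff.1
      ⟨fun l => by grind [update_apply], by have := sum_update_add d m 1; omega⟩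
    exact ⟨m, by
      rw [Pi.mulSingle, ← raised, update_idem, ← Nat.lt_one_iff.1 hm, update_eq_self]⟩
  · rintro ⟨m, rfl⟩
    exact ⟨fun a b => by grind, sum_mulSingle_add_one m 0⟩

lemma at_most_one_zero_and_one_lt_and_sum_eq_card_iff :
    (∀ a b, d a = 0 → d b = 0 → a = b) ∧ (∃ a, 1 < d a) ∧ ∑ l, d l = Fintype.card L ↔
      ∃ a m, a ≠ m ∧ update (Pi.mulSingle a 2) m 0 = d := by
  constructor
  · rintro ⟨hd, ⟨c, hc⟩, hs⟩
    obtain ⟨m, hm⟩ : ∃ m, d m = 0 := by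
      by_contra! hne
      have := one_le_and_sum_eq_card_iff.1 ⟨fun l => Nat.one_le_iff_ne_zero.2 (hne l), hs⟩
      simp [this] at hc
    obtain ⟨a, ha⟩ : ∃ a, Pi.mulSingle a 2 = update d m 1 :=
      one_le_and_sum_eq_card_add_one_iff.1
        ⟨fun l => by grind [update_apply], by have := sum_update_add d m 1; omega⟩
    refine ⟨a, m, ?_, by rw [ha, update_idem, ← hm, update_eq_self]⟩
    rintro rfl
    simpa using congrFun ha a
  · rintro ⟨a, m, ham, rfl⟩
    refine ⟨fun b c => by grind [update_apply], ⟨a, by simp [ham]⟩, ?_⟩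
    have h₁ := sum_mulSingle_add_one a 2
    have h₂ := sum_update_add (Pi.mulSingle a 2) m 0
    rw [Pi.mulSingle_eq_of_ne ham.symm] at h₂
    omega

lemma prod_choose_mulSingle (q : ℕ) (m : L) (c : ℕ) :
    ∏ l, q.choose ((Pi.mulSingle m c : L → ℕ) l) =
      q ^ (Fintype.card L - 1) * q.choose c := by
  rw [← prod_erase_mul _ _ (mem_univ m), Pi.mulSingle_eq_same,
    prod_eq_pow_card (b := q) fun l hl => by simp [ne_of_mem_erase hl],
    card_erase_of_mem (mem_univ m), card_univ]

lemma prod_choose_update_mulSingle (q : ℕ) {a m : L} (ham : a ≠ m) :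
    ∏ l, q.choose (update (Pi.mulSingle a 2 : L → ℕ) m 0 l) =
      q ^ (Fintype.card L - 2) * q.choose 2 := by
  have ha : a ∈ univ.erase m := mem_erase.2 ⟨ham, mem_univ a⟩
  rw [← prod_erase_mul _ _ (mem_univ m), ← prod_erase_mul _ _ ha,
    prod_eq_pow_card (b := q) fun l hl => by
      simp [ne_of_mem_erase hl, ne_of_mem_erase (mem_of_mem_erase hl)],
    card_erase_of_mem ha, card_erase_of_mem (mem_univ m), card_univ, Nat.sub_sub]
  simp [ham]

lemma card_image_mulSingle {c : ℕ} (hc : c ≠ 1) :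
    #(univ.image fun m => (Pi.mulSingle m c : L → ℕ)) = Fintype.card L :=
  card_image_of_injective _ fun a b hab => by
    have := congrFun hab a
    grind

lemma card_image_update_mulSingle :
    #((univ : Finset L).offDiag.image fun t => update (Pi.mulSingle t.1 2 : L → ℕ) t.2 0) =
      Fintype.card L * (Fintype.card L - 1) := by
  rw [card_image_of_injOn, offDiag_card, card_univ, Nat.mul_sub_one]
  rintro ⟨a, m⟩ ht ⟨a', m'⟩ ht' h
  have ha := congrFun h a
  have hm := congrFun h m
  simp only [coe_offDiag, Set.mem_offDiag] at ht ht'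
  grind [update_apply]

end Profiles

section Spanning

variable {L K V : Type*} [Field K] [AddCommGroup V] [Module K V]

lemma span_eq_top_iff_forall_dual {S : Set V} :
    Submodule.span K S = ⊤ ↔ ∀ φ : Dual K V, (∀ v ∈ S, φ v = 0) → φ = 0 := by
  rw [← Submodule.dualAnnihilator_eq_bot_iff, Submodule.eq_bot_iff]
  simp only [← SetLike.mem_coe, Submodule.coe_dualAnnihilator_span]
  rfl

lemma formsBasis_iff_span_eq_top {ι : Type*} {w : ι → V} {s : Finset ι}
    (hs : #s = finrank K V) :
    FormsBasis K w s ↔ Submodule.span K (w '' s) = ⊤ := by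
  refine ⟨And.right, fun h => ⟨?_, h⟩⟩
  refine linearIndependent_of_top_le_span_of_card_eq_finrank ?_ (by simpa using hs)
  rw [← h, Set.image_eq_range]
  rfl

variable [Fintype L]

/-- The only functional with value `x` at `e₁` and `y l` at `e_l` that vanishes at the vectors
`k·e₁ + e_l` for `k ∈ g l`, at `e₁` if `P` holds, and at the sum of the `e_l` if `Q` holds, is
zero. This is the dual form of the condition that these vectors span. -/
def SeparatesDual (P Q : Prop) (g : L → Finset K) : Prop :=
  ∀ (x : K) (y : L → K), (P → x = 0) → (Q → ∑ l, y l = 0) →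
    (∀ l, ∀ k ∈ g l, k * x + y l = 0) → x = 0 ∧ y = 0

variable {P Q : Prop} {g : L → Finset K}

lemma separatesDual_iff_true_of_nontrivial {m : L} (hm : (g m).Nontrivial) :
    SeparatesDual P Q g ↔ SeparatesDual True Q g := by
  refine ⟨fun h x y hx => h x y fun _ => hx trivial, fun h x y _ hy hg => ?_⟩
  obtain ⟨a, ha, b, hb, hab⟩ := hm
  have hx : (a - b) * x = 0 := by linear_combination hg m a ha - hg m b hb
  exact h x y (fun _ => (mul_eq_zero.1 hx).resolve_left (sub_ne_zero.2 hab)) hy hg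

lemma not_separatesDual_of_subset_singleton {k : L → K} (hk : ∀ l, g l ⊆ {k l})
    (hQ : Q → ∑ l, k l = 0) : ¬ SeparatesDual False Q g := fun h =>
  one_ne_zero (h 1 (-k) False.elim (fun hq => by simp [hQ hq]) fun l a ha => by
    simp [mem_singleton.1 (hk l ha)]).1

lemma separatesDual_true_false_iff : SeparatesDual True False g ↔ ∀ l, g l ≠ ∅ := by
  classical
  constructor
  · intro h l hl
    have hy : (Pi.single l 1 : L → K) = 0 := (h 0 _ (fun _ => rfl) False.elim fun m k hk => by
      have : m ≠ l := by rintro rfl; simp [hl] at hk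
      simp [this]).2
    simp at hy
  · intro h x y hx _ hg
    obtain rfl := hx trivial
    refine ⟨rfl, funext fun l => ?_⟩
    obtain ⟨k, hk⟩ := nonempty_iff_ne_empty.2 (h l)
    simpa using hg l k hk

lemma separatesDual_true_true_iff :
    SeparatesDual True True g ↔ ∀ a b, g a = ∅ → g b = ∅ → a = b := by
  classical
  constructor
  · intro h a b ha hb
    by_contra hab
    have hy : (Pi.single a 1 - Pi.single b 1 : L → K) = 0 :=
      (h 0 _ (fun _ => rfl) (by simp) fun m k hk => by
        have hma : m ≠ a := by rintro rfl; simp [ha] at hk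
        have hmb : m ≠ b := by rintro rfl; simp [hb] at hk
        simp [hma, hmb]).2
    simpa [hab] using congrFun hy a
  · intro h x y hx hy hg
    obtain rfl := hx trivial
    have hne (l) (hl : g l ≠ ∅) : y l = 0 := by
      obtain ⟨k, hk⟩ := nonempty_iff_ne_empty.2 hl
      simpa using hg l k hk
    refine ⟨rfl, funext fun l => ?_⟩
    by_cases hl : g l = ∅
    · have hsum := Fintype.sum_eq_single (f := y) l fun m hml =>
        hne m fun hm => hml (h m l hm hl)
      rw [← hsum, hy trivial, Pi.zero_apply]
    · exact hne l hl

lemma separatesDual_false_false_iff :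
    SeparatesDual False False g ↔ (∀ l, g l ≠ ∅) ∧ ∃ m, 1 < #(g m) := by
  by_cases hg : ∃ m, 1 < #(g m)
  · obtain ⟨m, hm⟩ := hg
    rw [separatesDual_iff_true_of_nontrivial (one_lt_card_iff_nontrivial.1 hm),
      separatesDual_true_false_iff, and_iff_left ⟨m, hm⟩]
  · simp only [hg, and_false, iff_false]
    push Not at hg
    choose k hk using fun l => card_le_one_iff_subset_singleton.1 (hg l)
    exact not_separatesDual_of_subset_singleton hk False.elim

lemma separatesDual_false_true_singleton_iff {k : L → K} :
    SeparatesDual False True (fun l => {k l}) ↔ ∑ l, k l ≠ 0 := by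
  refine ⟨fun h h₀ => not_separatesDual_of_subset_singleton (fun _ => Subset.rfl) (fun _ => h₀) h,
    fun h x y _ hy hg => ?_⟩
  have hyk (l) : y l = -(k l * x) := by linear_combination hg l (k l) (mem_singleton_self _)
  have hx : (∑ l, k l) * x = 0 := by
    simpa [hyk, ← sum_mul, sum_neg_distrib] using hy trivial
  obtain rfl := (mul_eq_zero.1 hx).resolve_left h
  exact ⟨rfl, funext fun l => by simp [hyk]⟩

lemma separatesDual_false_true_iff :
    SeparatesDual False True g ↔
      ((∀ a b, g a = ∅ → g b = ∅ → a = b) ∧ ∃ a, 1 < #(g a)) ∨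
        ∃ k : L → K, ∑ l, k l ≠ 0 ∧ g = fun l => {k l} := by
  classical
  by_cases hg : ∃ m, 1 < #(g m)
  · obtain ⟨m, hm⟩ := hg
    have hns : ¬ ∃ k : L → K, ∑ l, k l ≠ 0 ∧ g = fun l => {k l} := by
      rintro ⟨k, -, rfl⟩
      simp at hm
    rw [separatesDual_iff_true_of_nontrivial (one_lt_card_iff_nontrivial.1 hm),
      separatesDual_true_true_iff, and_iff_left ⟨m, hm⟩, or_iff_left hns]
  · simp only [hg, and_false, false_or]
    push Not at hg
    choose k hk using fun l => card_le_one_iff_subset_singleton.1 (hg l)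
    constructor
    · intro h
      have hne (m) : g m ≠ ∅ := fun hm =>
        -- An empty fibre leaves `k m` free, so the sum of the `k l` can be made zero.
        not_separatesDual_of_subset_singleton (k := update k m (k m - ∑ l, k l))
          (fun l => by
            obtain rfl | hl := eq_or_ne l m
            · simp [hm]
            · simpa [hl] using hk l)
          (fun _ => by
            rw [sum_update_of_mem (mem_univ m), sdiff_singleton_eq_erase,
              ← add_sum_erase univ k (mem_univ m)]
            ring) h
      obtain rfl : g = fun l => {k l} := funext fun l =>
        (subset_singleton_iff.1 (hk l)).resolve_left (hne l)
      exact ⟨k, separatesDual_false_true_singleton_iff.1 h, rfl⟩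
    · rintro ⟨f, hf, rfl⟩
      exact separatesDual_false_true_singleton_iff.2 hf

lemma separatesDual_false_true_and_sum_eq_card_iff [DecidableEq L] {g : L → Finset K} :
    SeparatesDual False True g ∧ ∑ l, #(g l) = Fintype.card L ↔
      (fun l => #(g l)) ∈
          univ.offDiag.image (fun t => update (Pi.mulSingle t.1 2 : L → ℕ) t.2 0) ∨
        g ∈ (fun (k : L → K) l => ({k l} : Finset K)) '' {k | ∑ l, k l ≠ 0} := by
  have profile := at_most_one_zero_and_one_lt_and_sum_eq_card_iff (d := fun l => #(g l))
  simp only [card_eq_zero] at profile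
  rw [separatesDual_false_true_iff, or_and_right, and_assoc, profile]
  refine or_congr (by simp) ⟨?_, ?_⟩
  · rintro ⟨⟨k, hk, rfl⟩, -⟩
    exact ⟨k, hk, rfl⟩
  · rintro ⟨k, hk, rfl⟩
    exact ⟨⟨k, hk, rfl⟩, by simp⟩

end Spanning

section SeparatingFamilies

variable {L K : Type*} [Fintype L] [Field K] [Fintype K]

lemma natCard_separatesDual_true_false :
    Nat.card {g : L → Finset K // SeparatesDual True False g ∧ ∑ l, #(g l) = Fintype.card L} =
      Fintype.card K ^ Fintype.card L := by
  have profile (g : L → Finset K) :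
      SeparatesDual True False g ∧ ∑ l, #(g l) = Fintype.card L ↔
        (fun l => #(g l)) ∈ ({1} : Finset (L → ℕ)) := by
    rw [separatesDual_true_false_iff, mem_singleton, ← one_le_and_sum_eq_card_iff]
    simp only [one_le_card, nonempty_iff_ne_empty]
  simp_rw [profile, natCard_profile_mem]
  simp

lemma natCard_separatesDual_true_true :
    Nat.card {g : L → Finset K //
        SeparatesDual True True g ∧ ∑ l, #(g l) + 1 = Fintype.card L} =
      Fintype.card L * Fintype.card K ^ (Fintype.card L - 1) := by
  classical
  have profile (g : L → Finset K) :
      SeparatesDual True True g ∧ ∑ l, #(g l) + 1 = Fintype.card L ↔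
        (fun l => #(g l)) ∈ univ.image fun m => (Pi.mulSingle m 0 : L → ℕ) := by
    have h := at_most_one_zero_and_sum_add_one_eq_card_iff (d := fun l => #(g l))
    simpa only [separatesDual_true_true_iff, card_eq_zero, mem_image, mem_univ, true_and] using h
  simp_rw [profile]
  rw [natCard_profile_mem_of_prod_eq (C := Fintype.card K ^ (Fintype.card L - 1)),
    card_image_mulSingle zero_ne_one]
  simp [prod_choose_mulSingle]

lemma natCard_separatesDual_false_false :
    Nat.card {g : L → Finset K //
        SeparatesDual False False g ∧ ∑ l, #(g l) = Fintype.card L + 1} =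
      Fintype.card L * (Fintype.card K ^ (Fintype.card L - 1) * (Fintype.card K).choose 2) := by
  classical
  have profile (g : L → Finset K) :
      SeparatesDual False False g ∧ ∑ l, #(g l) = Fintype.card L + 1 ↔
        (fun l => #(g l)) ∈ univ.image fun m => (Pi.mulSingle m 2 : L → ℕ) := by
    have h := one_le_and_sum_eq_card_add_one_iff (d := fun l => #(g l))
    simp only [one_le_card, nonempty_iff_ne_empty] at h
    simp only [separatesDual_false_false_iff, mem_image, mem_univ, true_and, ← h]
    refine ⟨fun ⟨⟨hne, _⟩, hs⟩ => ⟨hne, hs⟩, fun ⟨hne, hs⟩ => ⟨⟨hne, ?_⟩, hs⟩⟩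
    obtain ⟨m, -, hm⟩ : ∃ m ∈ univ, 1 < #(g m) :=
      exists_lt_of_sum_lt (s := univ) (f := fun _ : L => 1) (by simp [hs])
    exact ⟨m, hm⟩
  simp_rw [profile]
  rw [natCard_profile_mem_of_prod_eq (C := Fintype.card K ^ (Fintype.card L - 1) * _),
    card_image_mulSingle (by decide)]
  simp [prod_choose_mulSingle]

lemma natCard_separatesDual_false_true [Nonempty L] :
    Nat.card {g : L → Finset K // SeparatesDual False True g ∧ ∑ l, #(g l) = Fintype.card L} =
      Fintype.card L * (Fintype.card L - 1) *
          (Fintype.card K ^ (Fintype.card L - 2) * (Fintype.card K).choose 2) +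
        (Fintype.card K - 1) * Fintype.card K ^ (Fintype.card L - 1) := by
  classical
  simp_rw [separatesDual_false_true_and_sum_eq_card_iff]
  rw [natCard_subtype_or_of_disjoint, natCard_profile_mem_of_prod_eq
    (C := Fintype.card K ^ (Fintype.card L - 2) * (Fintype.card K).choose 2),
    card_image_update_mulSingle, ← natCard_sum_ne_zero]
  · congr 1
    exact Nat.card_image_of_injective (fun a b h => funext fun l => by simpa using congrFun h l) _
  · intro d hd
    obtain ⟨t, ht, rfl⟩ := mem_image.1 hd
    exact prod_choose_update_mulSingle _ (mem_offDiag.1 ht).2.2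
  · rintro g hg ⟨k, -, rfl⟩
    obtain ⟨t, -, ht⟩ := mem_image.1 hg
    simpa using congrFun ht t.2

end SeparatingFamilies

section Configuration

/-- The labels of a configuration generalizing `M_{r,p}`: one for `e₁`, one for the sum of the
other basis vectors `e_l`, and one for each `k·e₁ + e_l`. It is a nested sum, with the labels in
the same order as in `MrpIndex`, so that `MrpIndex r p` is an instance of it. -/
abbrev ConeLabel (L K : Type*) : Type _ := Unit ⊕ Unit ⊕ (L × K)

namespace ConeLabel

variable {L K : Type*}

/-- The label of the common first basis vector `e₁`, which plays the role of `i`. -/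
abbrev apex : ConeLabel L K := Sum.inl ()

/-- The label of the sum of the basis vectors other than `e₁`, which plays the role of `j`. -/
abbrev total : ConeLabel L K := Sum.inr (Sum.inl ())

/-- The label of the vector `k·e₁ + e_l`. -/
abbrev point (l : L) (k : K) : ConeLabel L K := Sum.inr (Sum.inr (l, k))

/-- The coefficients `k` for which the label of `k·e₁ + e_l` belongs to `s`. Together with the
membership of the two special labels, these sets determine `s`. -/
noncomputable def fibre (s : Finset (ConeLabel L K)) (l : L) : Finset K :=
  s.preimage (point l) fun _ _ _ _ h => by simpa using h

lemma mem_fibre {s : Finset (ConeLabel L K)} {l : L} {k : K} :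
    k ∈ fibre s l ↔ point l k ∈ s :=
  mem_preimage

variable [Fintype L]

open Classical in
/-- The set of labels with prescribed fibres `g` that contains the label of `e₁` iff `P` holds and
the label of the sum iff `Q` holds. -/
noncomputable def ofFibre (P Q : Prop) (g : L → Finset K) : Finset (ConeLabel L K) :=
  ({_u | P} : Finset Unit).disjSum <| ({_u | Q} : Finset Unit).disjSum <|
    (univ.sigma g).map (Equiv.sigmaEquivProd L K).toEmbedding

variable {P Q : Prop} {g : L → Finset K}

open Classical in
lemma card_ofFibre :
    #(ofFibre P Q g) = (if P then 1 else 0) + ((if Q then 1 else 0) + ∑ l, #(g l)) := by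
  simp [ofFibre, filter_const, apply_ite card]

lemma eq_ofFibre_iff {s : Finset (ConeLabel L K)} :
    s = ofFibre P Q g ↔ (apex ∈ s ↔ P) ∧ (total ∈ s ↔ Q) ∧ fibre s = g := by
  simp [Finset.ext_iff, funext_iff, ofFibre, mem_fibre, Unique.forall_iff, apex, total, point,
    -filter_const]

end ConeLabel

open ConeLabel

variable {L K V : Type*} [Fintype L] [Field K] [AddCommGroup V] [Module K V]
  (b : Basis (Option L) K V)

/-- The vectors of the configuration generalizing `M_{r,p}`, for a basis `b` in which `none` is the
index of `e₁`. -/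
noncomputable def coneVec : ConeLabel L K → V
  | Sum.inl _ => b none
  | Sum.inr (Sum.inl _) => ∑ l, b (some l)
  | Sum.inr (Sum.inr (l, k)) => k • b none + b (some l)

lemma formsBasis_coneVec_iff {s : Finset (ConeLabel L K)} (hs : #s = finrank K V) :
    FormsBasis K (coneVec b) s ↔ SeparatesDual (apex ∈ s) (total ∈ s) (fibre s) := by
  rw [formsBasis_iff_span_eq_top hs, span_eq_top_iff_forall_dual]
  simp only [Set.forall_mem_image]
  constructor
  · intro h x y hx hy hg
    have hφ := h (b.constr K fun o : Option L => o.elim x y) (by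
      rintro (_ | _ | ⟨l, k⟩) ha
      · simpa [coneVec, -Basis.constr_apply_fintype] using hx ha
      · simpa [coneVec, -Basis.constr_apply_fintype] using hy ha
      · simpa [coneVec, -Basis.constr_apply_fintype] using hg l k (mem_fibre.2 ha))
    have hb (o : Option L) : o.elim x y = 0 := by
      rw [← b.constr_basis K (fun o : Option L => o.elim x y), hφ, LinearMap.zero_apply]
    exact ⟨hb none, funext fun l => hb (some l)⟩
  · intro h φ hφ
    obtain ⟨hx, hy⟩ := h (φ (b none)) (fun l => φ (b (some l)))
      (fun hs => by simpa [coneVec] using hφ hs) (fun hs => by simpa [coneVec] using hφ hs)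
      (fun l k hk => by simpa [coneVec] using hφ (mem_fibre.1 hk))
    exact b.ext fun o => o.rec hx (congrFun hy)

open Classical in
lemma card_ofFibre_and_formsBasis_coneVec_iff {P Q : Prop} {g : L → Finset K} :
    #(ofFibre P Q g) = finrank K V ∧ FormsBasis K (coneVec b) (ofFibre P Q g) ↔
      SeparatesDual P Q g ∧
        (if P then 1 else 0) + ((if Q then 1 else 0) + ∑ l, #(g l)) = Fintype.card L + 1 := by
  obtain ⟨hP, hQ, hg⟩ := eq_ofFibre_iff.1 (Eq.refl (ofFibre P Q g))
  rw [and_congr_right fun h => formsBasis_coneVec_iff b h, hg, and_comm, card_ofFibre,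
    finrank_eq_card_basis b, Fintype.card_option]
  simp only [hP, hQ]

open Classical in
lemma natCard_bases_coneVec (P Q : Prop) :
    Nat.card {s : Finset (ConeLabel L K) // s.card = finrank K V ∧
        FormsBasis K (coneVec b) s ∧ (apex ∈ s ↔ P) ∧ (total ∈ s ↔ Q)} =
      Nat.card {g : L → Finset K // SeparatesDual P Q g ∧
        (if P then 1 else 0) + ((if Q then 1 else 0) + ∑ l, #(g l)) = Fintype.card L + 1} := by
  have injective : Injective (ofFibre P Q : (L → Finset K) → Finset (ConeLabel L K)) :=
    fun g h hgh => (eq_ofFibre_iff.1 rfl).2.2.symm.trans (eq_ofFibre_iff.1 hgh).2.2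
  simp_rw [← card_ofFibre_and_formsBasis_coneVec_iff b]
  refine .trans (Nat.card_congr <| Equiv.subtypeEquivRight fun s => ⟨?_, ?_⟩)
    (Nat.card_image_of_injective injective
      {g | #(ofFibre P Q g) = finrank K V ∧ FormsBasis K (coneVec b) (ofFibre P Q g)})
  · rintro ⟨hs, hb, hP, hQ⟩
    have h := eq_ofFibre_iff.2 ⟨hP, hQ, rfl⟩
    exact ⟨fibre s, by rw [Set.mem_ofPred_eq, ← h]; exact ⟨hs, hb⟩, h.symm⟩
  · rintro ⟨g, ⟨hs, hb⟩, rfl⟩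
    obtain ⟨hP, hQ, -⟩ := eq_ofFibre_iff.1 (Eq.refl (ofFibre P Q g))
    exact ⟨hs, hb, hP, hQ⟩

variable [Fintype K]

lemma natCard_bases_mem_mem :
    Nat.card {s : Finset (ConeLabel L K) // s.card = finrank K V ∧
        FormsBasis K (coneVec b) s ∧ apex ∈ s ∧ total ∈ s} =
      Fintype.card L * Fintype.card K ^ (Fintype.card L - 1) := by
  rw [← natCard_separatesDual_true_true]
  simpa [add_comm 1, ← add_assoc] using natCard_bases_coneVec b True True

lemma natCard_bases_mem_notMem :
    Nat.card {s : Finset (ConeLabel L K) // s.card = finrank K V ∧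
        FormsBasis K (coneVec b) s ∧ apex ∈ s ∧ total ∉ s} =
      Fintype.card K ^ Fintype.card L := by
  rw [← natCard_separatesDual_true_false]
  simpa [add_comm 1] using natCard_bases_coneVec b True False

lemma two_mul_natCard_bases_notMem_mem [Nonempty L] :
    2 * Nat.card {s : Finset (ConeLabel L K) // s.card = finrank K V ∧
        FormsBasis K (coneVec b) s ∧ apex ∉ s ∧ total ∈ s} =
      Fintype.card K ^ (Fintype.card L - 1) * (Fintype.card K - 1) *
        (2 + Fintype.card L * (Fintype.card L - 1)) := by
  have h := natCard_bases_coneVec b False True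
  simp only [iff_false, iff_true, if_false, if_true, zero_add, add_comm 1, add_left_inj,
    natCard_separatesDual_false_true] at h
  rw [h, two_mul_mul_choose_two_add]

lemma two_mul_natCard_bases_notMem_notMem :
    2 * Nat.card {s : Finset (ConeLabel L K) // s.card = finrank K V ∧
        FormsBasis K (coneVec b) s ∧ apex ∉ s ∧ total ∉ s} =
      Fintype.card L * Fintype.card K ^ Fintype.card L * (Fintype.card K - 1) := by
  have h := natCard_bases_coneVec b False False
  simp only [iff_false, if_false, zero_add, natCard_separatesDual_false_false] at h
  have hC := choose_two_mul_two (Fintype.card K)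
  rw [h]
  cases hn : Fintype.card L with
  | zero => simp
  | succ m =>
    simp only [add_tsub_cancel_right, pow_succ]
    linear_combination (m + 1) * Fintype.card K ^ m * hC

end Configuration

section Correlation

open ConeLabel

lemma lt_iff_and_div_eq_of_counts {a b c d n q : ℕ} (hn : 1 ≤ n) (hq : 2 ≤ q)
    (ha : a = n * q ^ (n - 1)) (hb : b = q ^ n)
    (hc : 2 * c = q ^ (n - 1) * (q - 1) * (2 + n * (n - 1)))
    (hd : 2 * d = n * q ^ n * (q - 1)) :
    (b * c < d * a ↔ 3 ≤ n) ∧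
      (d * a : ℝ) / (b * c) = (n : ℝ) ^ 2 / (2 + n * (n - 1)) := by
  obtain ⟨m, rfl⟩ := Nat.exists_eq_add_of_le' hn
  obtain ⟨t, rfl⟩ := Nat.exists_eq_add_of_le' (one_le_two.trans hq)
  simp only [add_tsub_cancel_right] at ha hc hd
  set Y := (t + 1) ^ (m + 1) * (t + 1) ^ m * t with hY
  have hda : 2 * (d * a) = Y * (m + 1) ^ 2 := by rw [← mul_assoc, hd, ha, hY]; ring
  have hbc : 2 * (b * c) = Y * (2 + (m + 1) * m) := by rw [mul_left_comm, hc, hb, hY]; ring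
  have hY₀ : 0 < Y := by
    have : 0 < t := by omega
    positivity
  constructor
  · rw [← Nat.mul_lt_mul_left two_pos, hda, hbc, Nat.mul_lt_mul_left hY₀]
    constructor <;> intro h <;> nlinarith
  · have hda' : 2 * (d * a : ℝ) = Y * (m + 1) ^ 2 := mod_cast hda
    have hbc' : 2 * (b * c : ℝ) = Y * (2 + (m + 1) * m) := mod_cast hbc
    rw [← mul_div_mul_left _ _ (two_ne_zero (α := ℝ)), hda', hbc',
      mul_div_mul_left _ _ (by positivity)]
    push_cast
    ring

theorem stmt14_general {L K V : Type*} [Fintype L] [Nonempty L] [Field K] [Finite K]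
    [AddCommGroup V] [Module K V] (b : Basis (Option L) K V) :
    (Nat.card {s : Finset (ConeLabel L K) //
            s.card = finrank K V ∧ FormsBasis K (coneVec b) s} *
          Nat.card {s : Finset (ConeLabel L K) //
            s.card = finrank K V ∧ FormsBasis K (coneVec b) s ∧ apex ∈ s ∧ total ∈ s} >
        Nat.card {s : Finset (ConeLabel L K) //
            s.card = finrank K V ∧ FormsBasis K (coneVec b) s ∧ apex ∈ s} *
          Nat.card {s : Finset (ConeLabel L K) //
            s.card = finrank K V ∧ FormsBasis K (coneVec b) s ∧ total ∈ s} ↔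
      4 ≤ finrank K V) ∧
    ((Nat.card {s : Finset (ConeLabel L K) //
            s.card = finrank K V ∧ FormsBasis K (coneVec b) s ∧ apex ∉ s ∧ total ∉ s} : ℝ) *
          (Nat.card {s : Finset (ConeLabel L K) //
            s.card = finrank K V ∧ FormsBasis K (coneVec b) s ∧ apex ∈ s ∧ total ∈ s} : ℝ)) /
        ((Nat.card {s : Finset (ConeLabel L K) //
            s.card = finrank K V ∧ FormsBasis K (coneVec b) s ∧ apex ∈ s ∧ total ∉ s} : ℝ) *
          (Nat.card {s : Finset (ConeLabel L K) //
            s.card = finrank K V ∧ FormsBasis K (coneVec b) s ∧ apex ∉ s ∧ total ∈ s} : ℝ)) =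
      ((finrank K V : ℝ) - 1) ^ 2 /
        (2 + ((finrank K V : ℝ) - 1) * ((finrank K V : ℝ) - 2)) := by
  have := Fintype.ofFinite K
  obtain ⟨hlt, hdiv⟩ := lt_iff_and_div_eq_of_counts Fintype.card_pos Fintype.one_lt_card
    (natCard_bases_mem_mem b) (natCard_bases_mem_notMem b)
    (two_mul_natCard_bases_notMem_mem b) (two_mul_natCard_bases_notMem_notMem b)
  have hV : finrank K V = Fintype.card L + 1 := by simp [finrank_eq_card_basis b]
  have hV₁ : (finrank K V : ℝ) - 1 = Fintype.card L := by rw [hV]; push_cast; ring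
  have hV₂ : (finrank K V : ℝ) - 2 = Fintype.card L - 1 := by rw [hV]; push_cast; ring
  rw [gt_iff_lt, natCard_mul_lt_natCard_mul_iff, hlt, hdiv, hV₁, hV₂, hV]
  exact ⟨by omega, rfl⟩

end Correlation

section Matroid

/-- The standard basis of `F_p^r`, with `e₁` indexed by `none`. -/
noncomputable def mrpBasis (r p : ℕ) [NeZero r] [Fact p.Prime] :
    Basis (Option {l : Fin r // l.val ≠ 0}) (ZMod p) (Fin r → ZMod p) :=
  (Pi.basisFun (ZMod p) (Fin r)).reindex <| .symm <|
    (Equiv.optionCongr <| Equiv.subtypeEquivRight fun l => by simp).trans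
      (Equiv.optionSubtypeNe (0 : Fin r))

lemma mrpVec_eq_coneVec (r p : ℕ) [NeZero r] [Fact p.Prime] :
    mrpVec r p = coneVec (mrpBasis r p) := by
  have none_apply (m) : mrpBasis r p none m = if m.val = 0 then 1 else 0 := by
    simp [mrpBasis, Pi.single_apply]
  have some_apply (l m) : mrpBasis r p (some l) m = if m = l.1 then 1 else 0 := by
    simp [mrpBasis, Pi.single_apply]
  funext a m
  obtain _ | _ | ⟨l, k⟩ := a
  · simp [mrpVec, coneVec, none_apply]
  · by_cases hm : m.val = 0
    · have (l : {l : Fin r // l.val ≠ 0}) : m ≠ l.1 := fun h => l.2 (h ▸ hm)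
      simp [mrpVec, coneVec, some_apply, hm, this]
    · rw [coneVec, Finset.sum_apply, Fintype.sum_eq_single ⟨m, hm⟩]
      · simp [mrpVec, some_apply, hm]
      · intro l hl
        have : m ≠ l.1 := fun h => hl (Subtype.ext h.symm)
        simp [some_apply, this]
  · have : m.val = 0 → m ≠ l.1 := fun hm h => l.2 (h ▸ hm)
    by_cases hm : m.val = 0 <;> simp [mrpVec, coneVec, none_apply, some_apply, hm, this]

end Matroid

/-- For a prime `p` and `r ≥ 4`, in the matroid `M_{r,p}` the pair consisting of the
label `i` of `e₁` and the label `j` of `v` is positively correlated,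
i.e. `b·b_{ij} > b_i·b_j`, and `α(M_{r,p}; i, j) = (r−1)²/(2 + (r−1)·(r−2))`. -/
theorem stmt14 (p r : ℕ) [Fact p.Prime] (hr : 4 ≤ r) :
    Nat.card {s : Finset (MrpIndex r p) //
          s.card = r ∧ FormsBasis (ZMod p) (mrpVec r p) s} *
        Nat.card {s : Finset (MrpIndex r p) //
          s.card = r ∧ FormsBasis (ZMod p) (mrpVec r p) s ∧
            mrpI r p ∈ s ∧ mrpJ r p ∈ s} >
      Nat.card {s : Finset (MrpIndex r p) //
          s.card = r ∧ FormsBasis (ZMod p) (mrpVec r p) s ∧ mrpI r p ∈ s} *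
        Nat.card {s : Finset (MrpIndex r p) //
          s.card = r ∧ FormsBasis (ZMod p) (mrpVec r p) s ∧ mrpJ r p ∈ s} ∧
    ((Nat.card {s : Finset (MrpIndex r p) //
          s.card = r ∧ FormsBasis (ZMod p) (mrpVec r p) s ∧
            mrpI r p ∉ s ∧ mrpJ r p ∉ s} : ℝ) *
        (Nat.card {s : Finset (MrpIndex r p) //
          s.card = r ∧ FormsBasis (ZMod p) (mrpVec r p) s ∧
            mrpI r p ∈ s ∧ mrpJ r p ∈ s} : ℝ)) /
      ((Nat.card {s : Finset (MrpIndex r p) //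
          s.card = r ∧ FormsBasis (ZMod p) (mrpVec r p) s ∧
            mrpI r p ∈ s ∧ mrpJ r p ∉ s} : ℝ) *
        (Nat.card {s : Finset (MrpIndex r p) //
          s.card = r ∧ FormsBasis (ZMod p) (mrpVec r p) s ∧
            mrpI r p ∉ s ∧ mrpJ r p ∈ s} : ℝ)) =
      ((r : ℝ) - 1) ^ 2 / (2 + ((r : ℝ) - 1) * ((r : ℝ) - 2)) := by
  have : NeZero r := ⟨by omega⟩
  have : Nonempty {l : Fin r // l.val ≠ 0} := ⟨⟨1, by omega⟩, one_ne_zero⟩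
  have h := stmt14_general (mrpBasis r p)
  rw [← mrpVec_eq_coneVec, finrank_fin_fun] at h
  exact ⟨h.1.2 hr, h.2⟩
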